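/- Let F_k be the class of all Boolean functions f : {0,1}^n → {±1} whose maximum sensitivity is at most k, where 0 ≤ k ≤ n. Then the VC dimension of F_k is at most Σ_{i=0}^{2k} C(n,i); concretely, if a finite set T ⊆ {0,1}^n is shattered by F_k (for every subset A ⊆ T there exists f ∈ F_k with f(x) = 1 for all x ∈ A and f(x) = −1 for all x ∈ T \ A), then |T| ≤ Σ_{i=0}^{2k} C(n,i). -/

import Mathlib

open Finset

/-- Flip the `i`-th bit of `x ∈ {0,1}^n`. -/
def flipBit {n : ℕ} (x : Fin n → Bool) (i : Fin n) : Fin n → Bool :=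
  Function.update x i (!x i)

/-- Sensitivity of a Boolean function `f : {0,1}^n → ℤ` (with values ±1) at input `x`. -/
def sens {n : ℕ} (f : (Fin n → Bool) → ℤ) (x : Fin n → Bool) : ℕ :=
  (Finset.univ.filter (fun i : Fin n => f x ≠ f (flipBit x i))).card

/-- Maximum sensitivity `ms(f) = max_x s(f,x)`. -/
def maxSens {n : ℕ} (f : (Fin n → Bool) → ℤ) : ℕ :=
  Finset.univ.sup (fun x : Fin n → Bool => sens f x)

/-- The set of coordinates at which `x` equals `1`. -/
def onesSet {n : ℕ} (x : Fin n → Bool) : Finset (Fin n) :=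
  Finset.univ.filter (fun i => x i = true)

theorem onesSet_injective {n : ℕ} : Function.Injective (onesSet (n := n)) := by
  intro x y h
  funext i
  have hi := Finset.ext_iff.mp h i
  simp only [onesSet, Finset.mem_filter, Finset.mem_univ, true_and] at hi
  exact Bool.eq_iff_iff.mpr hi

theorem card_onesSet_flipBit_lt {n : ℕ} {x : Fin n → Bool} {i : Fin n} (hi : i ∈ onesSet x) :
    (onesSet (flipBit x i)).card < (onesSet x).card := by
  have hxi : x i = true := by simpa [onesSet] using hi
  refine Finset.card_lt_card (Finset.ssubset_iff_of_subset ?_ |>.mpr ⟨i, hi, ?_⟩)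
  · intro j hj
    by_cases hji : j = i
    · exact hji ▸ hi
    · have hj' := (Finset.mem_filter.mp hj).2
      rw [flipBit, Function.update_of_ne hji] at hj'
      exact Finset.mem_filter.mpr ⟨Finset.mem_univ j, hj'⟩
  · simp [onesSet, flipBit, hxi]

/-- The Hamming ball of radius `r` around the origin of `{0,1}^n`. -/
def hammingBall (n r : ℕ) : Finset (Fin n → Bool) :=
  Finset.univ.filter (fun x => (onesSet x).card ≤ r)

theorem card_hammingBall_le (n r : ℕ) :
    (hammingBall n r).card ≤ ∑ i ∈ Finset.range (r + 1), n.choose i := by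
  calc (hammingBall n r).card
      ≤ ((Finset.range (r + 1)).biUnion
          (fun i => Finset.powersetCard i (Finset.univ : Finset (Fin n)))).card := by
        refine Finset.card_le_card_of_injOn onesSet (fun x hx => ?_) onesSet_injective.injOn
        have hx' : (onesSet x).card ≤ r := by simpa [hammingBall] using hx
        simp only [Finset.coe_biUnion, Set.mem_iUnion, Finset.mem_coe]
        exact ⟨(onesSet x).card, Finset.mem_range.mpr (Nat.lt_succ_of_le hx'),
          Finset.mem_powersetCard.mpr ⟨Finset.subset_univ _, rfl⟩⟩
    _ ≤ ∑ i ∈ Finset.range (r + 1),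
          (Finset.powersetCard i (Finset.univ : Finset (Fin n))).card := Finset.card_biUnion_le
    _ = ∑ i ∈ Finset.range (r + 1), n.choose i := by simp

theorem sens_le_maxSens {n : ℕ} (f : (Fin n → Bool) → ℤ) (x : Fin n → Bool) :
    sens f x ≤ maxSens f :=
  Finset.le_sup (f := fun x => sens f x) (Finset.mem_univ x)

/-- A function of maximum sensitivity at most `k` is determined by its values on the Hamming
ball of radius `2 * k`. -/
theorem eq_of_eqOn_hammingBall {n k : ℕ} {f g : (Fin n → Bool) → ℤ}
    (hf : maxSens f ≤ k) (hg : maxSens g ≤ k)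
    (h : ∀ x ∈ hammingBall n (2 * k), f x = g x) : f = g := by
  funext x
  induction hw : (onesSet x).card using Nat.strong_induction_on generalizing x with
  | _ w ih =>
    by_cases hx : (onesSet x).card ≤ 2 * k
    · exact h x (by simpa [hammingBall] using hx)
    · by_contra hne
      have hsub : onesSet x ⊆
          Finset.univ.filter (fun i : Fin n => f x ≠ f (flipBit x i)) ∪
          Finset.univ.filter (fun i : Fin n => g x ≠ g (flipBit x i)) := by
        intro i hi
        have hflip := ih _ (hw ▸ card_onesSet_flipBit_lt hi) (flipBit x i) rfl
        simp only [Finset.mem_union, Finset.mem_filter, Finset.mem_univ, true_and]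
        by_contra! hcon
        exact hne (hcon.1.trans (hflip.trans hcon.2.symm))
      have hcard : (onesSet x).card ≤ sens f x + sens g x :=
        (Finset.card_le_card hsub).trans (Finset.card_union_le _ _)
      have hfx := (sens_le_maxSens f x).trans hf
      have hgx := (sens_le_maxSens g x).trans hg
      omega

/-- Any set `T ⊆ {0,1}^n` shattered by the class of ±1-valued functions of maximum
sensitivity at most `k` has cardinality at most `Σ_{i=0}^{2k} C(n,i)`; i.e. the VC
dimension of `F_k` is at most `Σ_{i=0}^{2k} C(n,i)`. -/
theorem vcDim_lowSens_le {n k : ℕ} (hk : k ≤ n) (T : Finset (Fin n → Bool))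
    (hshatter : ∀ A ⊆ T, ∃ f : (Fin n → Bool) → ℤ,
      (∀ x, f x = 1 ∨ f x = -1) ∧ maxSens f ≤ k ∧
      (∀ x ∈ A, f x = 1) ∧ (∀ x ∈ T \ A, f x = -1)) :
    T.card ≤ ∑ i ∈ Finset.range (2 * k + 1), n.choose i := by
  choose! f hpm hsens hone hneg using hshatter
  have hmem : ∀ A ⊆ T, ∀ x ∈ T, (x ∈ A ↔ f A x = 1) := by
    intro A hA x hx
    refine ⟨hone A hA x, fun h1 => ?_⟩
    by_contra hxA
    have := hneg A hA x (Finset.mem_sdiff.mpr ⟨hx, hxA⟩)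
    omega
  have hpow : T.powerset.card ≤ (hammingBall n (2 * k)).powerset.card := by
    refine Finset.card_le_card_of_injOn
      (fun A => (hammingBall n (2 * k)).filter (fun x => f A x = 1))
      (fun A _ => Finset.mem_coe.mpr (Finset.mem_powerset.mpr (Finset.filter_subset _ _))) ?_
    intro A hA B hB hAB
    have hA' : A ⊆ T := by simpa using hA
    have hB' : B ⊆ T := by simpa using hB
    have hfg : f A = f B := by
      refine eq_of_eqOn_hammingBall (hsens A hA') (hsens B hB') fun x hx => ?_
      have hiff : f A x = 1 ↔ f B x = 1 := Finset.filter_inj'.mp hAB hx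
      have h1 := hpm A hA' x
      have h2 := hpm B hB' x
      omega
    ext x
    by_cases hx : x ∈ T
    · rw [hmem A hA' x hx, hmem B hB' x hx, hfg]
    · exact ⟨fun h => absurd (hA' h) hx, fun h => absurd (hB' h) hx⟩
  rw [Finset.card_powerset, Finset.card_powerset] at hpow
  exact ((Nat.pow_le_pow_iff_right (by norm_num)).mp hpow).trans (card_hammingBall_le n (2 * k))
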